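/- arXiv:0912.2378 — 7 statements merged into one kernel-verified Lean document; each statement's English description precedes it below -/
import Mathlib

section
/- Bound on the interference cross term: with the notation below, V(D) = Σ_{k1D,k10,k2D,k20} C(k1D,k10,k2D,k20)·((P^D)_{k1D,k10} − π)·((P^D)_{k2D,k20} − π)·π² satisfies V(D) ≤ c₁·λ^D, where c₁ = Σ_{k1D,k2D} (max_{k10,k20} C(k1D,k10,k2D,k20))·π. -/
/-- Bound on the interference cross term: `V(D) ≤ c₁ · λ^D`, where
`V(D) = Σ C·((P^D)_{k1D,k10} − π)·((P^D)_{k2D,k20} − π)·π²`,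
`c₁ = Σ_{k1D,k2D} (max_{k10,k20} C)·π`, and `π = 1/N`.
`P` is row stochastic and satisfies the Markov convergence bound
`(Σ_m |(P^D)_{lm} − 1/N|)² ≤ N·λ^D` (i.e. `λ^D / π_l`). -/
theorem interference_cross_term_bound (N : ℕ) [NeZero N]
    (P : Matrix (Fin N) (Fin N) ℝ)
    (hP0 : ∀ l m, 0 ≤ P l m) (hP1 : ∀ l, ∑ m, P l m = 1)
    (lam : ℝ) (hlam0 : 0 ≤ lam) (hlam1 : lam ≤ 1) (D : ℕ)
    (hconv : ∀ l, (∑ m, |(P ^ D) l m - 1 / (N : ℝ)|) ^ 2 ≤ (N : ℝ) * lam ^ D)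
    (C : Fin N × Fin N × Fin N × Fin N → ℝ) (hC : ∀ x, 0 ≤ C x) :
    (∑ k1D : Fin N, ∑ k10 : Fin N, ∑ k2D : Fin N, ∑ k20 : Fin N,
        C (k1D, k10, k2D, k20) * ((P ^ D) k1D k10 - 1 / (N : ℝ))
          * ((P ^ D) k2D k20 - 1 / (N : ℝ)) * (1 / (N : ℝ)) ^ 2)
      ≤ (∑ k1D : Fin N, ∑ k2D : Fin N,
          (Finset.univ.sup' Finset.univ_nonempty fun k10 : Fin N =>
            Finset.univ.sup' Finset.univ_nonempty fun k20 : Fin N =>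
              C (k1D, k10, k2D, k20)) * (1 / (N : ℝ))) * lam ^ D := by
  have hN : (0 : ℝ) < N := by exact_mod_cast Nat.pos_of_ne_zero (NeZero.ne N)
  rw [Finset.sum_mul]
  refine Finset.sum_le_sum fun a _ => ?_
  rw [Finset.sum_comm, Finset.sum_mul]
  refine Finset.sum_le_sum fun b _ => ?_
  set M := (Finset.univ.sup' Finset.univ_nonempty fun k10 : Fin N =>
            Finset.univ.sup' Finset.univ_nonempty fun k20 : Fin N =>
              C (a, k10, b, k20)) with hM
  have hCM : ∀ x y, C (a, x, b, y) ≤ M := fun x y =>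
    (Finset.le_sup' (fun k20 : Fin N => C (a, x, b, k20)) (Finset.mem_univ y)).trans
      (Finset.le_sup' (fun k10 : Fin N => Finset.univ.sup' Finset.univ_nonempty
        fun k20 : Fin N => C (a, k10, b, k20)) (Finset.mem_univ x))
  have hM0 : 0 ≤ M := (hC _).trans (hCM a a)
  have h1 := hconv a
  have h2 := hconv b
  have hS : (∑ m, |(P ^ D) a m - 1 / (N : ℝ)|) * (∑ m, |(P ^ D) b m - 1 / (N : ℝ)|)
      ≤ N * lam ^ D := by
    nlinarith [sq_nonneg ((∑ m, |(P ^ D) a m - 1 / (N : ℝ)|)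
      - (∑ m, |(P ^ D) b m - 1 / (N : ℝ)|))]
  calc _ ≤ ∑ x, ∑ y, M * (|(P ^ D) a x - 1 / (N : ℝ)| * |(P ^ D) b y - 1 / (N : ℝ)|)
          * (1 / (N : ℝ)) ^ 2 := by
        refine Finset.sum_le_sum fun x _ => Finset.sum_le_sum fun y _ => ?_
        refine mul_le_mul_of_nonneg_right ?_ (by positivity)
        rw [mul_assoc, ← abs_mul]
        exact (mul_le_mul_of_nonneg_left (le_abs_self _) (hC _)).trans
          (mul_le_mul_of_nonneg_right (hCM x y) (abs_nonneg _))
    _ = M * ((∑ m, |(P ^ D) a m - 1 / (N : ℝ)|) * (∑ m, |(P ^ D) b m - 1 / (N : ℝ)|))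
          * (1 / (N : ℝ)) ^ 2 := by
        rw [Finset.sum_mul_sum]
        simp only [Finset.mul_sum, Finset.sum_mul]
    _ ≤ M * (N * lam ^ D) * (1 / (N : ℝ)) ^ 2 := by gcongr
    _ = M * (1 / (N : ℝ)) * lam ^ D := by field_simp
end

section
/- Bound on the first desired-channel cross term: with the notation below, Σ_{k1D,k10,k2D,k20} C(k1D,k10,k2D,k20)·((P^D)_{k1D,k10} − π)·π³ ≤ c₂·(√λ)^D, where c₂ = Σ_{k1D,k2D,k20} (max_{k10} C(k1D,k10,k2D,k20))·π²·√π. -/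
/-- Bound on the first desired-channel cross term:
`Σ C·((P^D)_{k1D,k10} − π)·π³ ≤ c₂·(√λ)^D`, where
`c₂ = Σ_{k1D,k2D,k20} (max_{k10} C)·π²·√π` and `π = 1/N`.
`P` is row stochastic and satisfies the Markov convergence bound
`(Σ_m |(P^D)_{lm} − 1/N|)² ≤ N·λ^D`. -/
theorem desired_channel_cross_term_bound (N : ℕ) [NeZero N]
    (P : Matrix (Fin N) (Fin N) ℝ)
    (hP0 : ∀ l m, 0 ≤ P l m) (hP1 : ∀ l, ∑ m, P l m = 1)
    (lam : ℝ) (hlam0 : 0 ≤ lam) (hlam1 : lam ≤ 1) (D : ℕ)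
    (hconv : ∀ l, (∑ m, |(P ^ D) l m - 1 / (N : ℝ)|) ^ 2 ≤ (N : ℝ) * lam ^ D)
    (C : Fin N × Fin N × Fin N × Fin N → ℝ) (hC : ∀ x, 0 ≤ C x) :
    (∑ k1D : Fin N, ∑ k10 : Fin N, ∑ k2D : Fin N, ∑ k20 : Fin N,
        C (k1D, k10, k2D, k20) * ((P ^ D) k1D k10 - 1 / (N : ℝ))
          * (1 / (N : ℝ)) ^ 3)
      ≤ (∑ k1D : Fin N, ∑ k2D : Fin N, ∑ k20 : Fin N,
          (Finset.univ.sup' Finset.univ_nonempty fun k10 : Fin N =>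
              C (k1D, k10, k2D, k20))
            * (1 / (N : ℝ)) ^ 2 * Real.sqrt (1 / (N : ℝ)))
        * Real.sqrt lam ^ D := by
  have hN : (0 : ℝ) < N := by exact_mod_cast Nat.pos_of_ne_zero (NeZero.ne N)
  have hpi : (0 : ℝ) < 1 / (N : ℝ) := by positivity
  have hpiN : 1 / (N : ℝ) * N = 1 := by field_simp
  generalize 1 / (N : ℝ) = p at *
  have key : ∀ l, (∑ m, |(P ^ D) l m - p|) * p ≤ Real.sqrt p * Real.sqrt lam ^ D := by
    intro l
    refine (abs_le_of_sq_le_sq' ?_ (by positivity)).2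
    have h1 : (Real.sqrt p * Real.sqrt lam ^ D) ^ 2 = p * lam ^ D := by
      rw [mul_pow, Real.sq_sqrt hpi.le, ← pow_mul, mul_comm D 2, pow_mul, Real.sq_sqrt hlam0]
    rw [h1, mul_pow]
    calc _ ≤ ((N : ℝ) * lam ^ D) * p ^ 2 := by
          have := hconv l
          gcongr
      _ = (p * N) * (p * lam ^ D) := by ring
      _ = _ := by rw [hpiN, one_mul]
  rw [Finset.sum_mul]
  refine Finset.sum_le_sum fun a _ => ?_
  rw [Finset.sum_comm, Finset.sum_mul]
  refine Finset.sum_le_sum fun b _ => ?_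
  rw [Finset.sum_comm, Finset.sum_mul]
  refine Finset.sum_le_sum fun c _ => ?_
  set M := Finset.univ.sup' Finset.univ_nonempty fun k : Fin N => C (a, k, b, c) with hM
  have hle : ∀ k, C (a, k, b, c) ≤ M := fun k =>
    Finset.le_sup' (fun k : Fin N => C (a, k, b, c)) (Finset.mem_univ k)
  have hM0 : 0 ≤ M := (hC (a, 0, b, c)).trans (hle 0)
  calc _ ≤ ∑ k, M * |(P ^ D) a k - p| * p ^ 3 := by
        refine Finset.sum_le_sum fun k _ => ?_
        refine mul_le_mul_of_nonneg_right ?_ (by positivity)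
        exact (mul_le_mul_of_nonneg_left (le_abs_self _) (hC _)).trans
          (mul_le_mul_of_nonneg_right (hle k) (abs_nonneg _))
    _ = M * p ^ 2 * ((∑ m, |(P ^ D) a m - p|) * p) := by
        rw [← Finset.sum_mul, ← Finset.mul_sum]; ring
    _ ≤ M * p ^ 2 * (Real.sqrt p * Real.sqrt lam ^ D) :=
        mul_le_mul_of_nonneg_left (key a) (by positivity)
    _ = _ := by ring
end

section
/- Bound on the interfering-channel cross term: with the notation below, Σ_{k1D,k10,k2D,k20} C(k1D,k10,k2D,k20)·((P^D)_{k2D,k20} − π)·π³ ≤ c₃·(√λ)^D, where c₃ = Σ_{k2D,k10,k1D} (max_{k20} C(k1D,k10,k2D,k20))·π²·√π. -/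
/-- Bound on the interfering-channel cross term:
`Σ C·((P^D)_{k2D,k20} − π)·π³ ≤ c₃·(√λ)^D`, where
`c₃ = Σ_{k2D,k10,k1D} (max_{k20} C)·π²·√π` and `π = 1/N`.
`P` is row stochastic and satisfies the Markov convergence bound
`(Σ_m |(P^D)_{lm} − 1/N|)² ≤ N·λ^D`. -/
theorem interfering_channel_cross_term_bound (N : ℕ) [NeZero N]
    (P : Matrix (Fin N) (Fin N) ℝ)
    (hP0 : ∀ l m, 0 ≤ P l m) (hP1 : ∀ l, ∑ m, P l m = 1)
    (lam : ℝ) (hlam0 : 0 ≤ lam) (hlam1 : lam ≤ 1) (D : ℕ)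
    (hconv : ∀ l, (∑ m, |(P ^ D) l m - 1 / (N : ℝ)|) ^ 2 ≤ (N : ℝ) * lam ^ D)
    (C : Fin N × Fin N × Fin N × Fin N → ℝ) (hC : ∀ x, 0 ≤ C x) :
    (∑ k1D : Fin N, ∑ k10 : Fin N, ∑ k2D : Fin N, ∑ k20 : Fin N,
        C (k1D, k10, k2D, k20) * ((P ^ D) k2D k20 - 1 / (N : ℝ))
          * (1 / (N : ℝ)) ^ 3)
      ≤ (∑ k2D : Fin N, ∑ k10 : Fin N, ∑ k1D : Fin N,
          (Finset.univ.sup' Finset.univ_nonempty fun k20 : Fin N =>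
              C (k1D, k10, k2D, k20))
            * (1 / (N : ℝ)) ^ 2 * Real.sqrt (1 / (N : ℝ)))
        * Real.sqrt lam ^ D := by
  have hN : (0 : ℝ) < N := Nat.cast_pos.mpr (Nat.pos_of_ne_zero (NeZero.ne N))
  have hS : ∀ l, (∑ m, |(P ^ D) l m - 1 / (N : ℝ)|)
      ≤ N * Real.sqrt (1 / (N : ℝ)) * Real.sqrt lam ^ D := by
    intro l
    refine le_trans (le_abs_self _) (abs_le_of_sq_le_sq ?_ (by positivity))
    have h1 : (N * Real.sqrt (1 / (N : ℝ)) * Real.sqrt lam ^ D) ^ 2 = N * lam ^ D := by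
      rw [mul_pow, mul_pow, Real.sq_sqrt (by positivity), ← pow_mul, mul_comm D 2, pow_mul,
        Real.sq_sqrt hlam0]
      field_simp
    rw [h1]
    exact hconv l
  have key : ∀ k1D k10 k2D : Fin N,
      (∑ k20 : Fin N, C (k1D, k10, k2D, k20) * ((P ^ D) k2D k20 - 1 / (N : ℝ))
          * (1 / (N : ℝ)) ^ 3)
      ≤ (Finset.univ.sup' Finset.univ_nonempty fun k20 : Fin N =>
              C (k1D, k10, k2D, k20))
            * (1 / (N : ℝ)) ^ 2 * Real.sqrt (1 / (N : ℝ)) * Real.sqrt lam ^ D := by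
    intro k1D k10 k2D
    set M := Finset.univ.sup' Finset.univ_nonempty fun k20 : Fin N =>
              C (k1D, k10, k2D, k20) with hM
    have hle : ∀ k20, C (k1D, k10, k2D, k20) ≤ M := fun k20 =>
      Finset.le_sup' (fun k20 : Fin N => C (k1D, k10, k2D, k20)) (Finset.mem_univ k20)
    have hM0 : 0 ≤ M := (hC _).trans (hle k2D)
    calc _ ≤ ∑ k20 : Fin N, M * |(P ^ D) k2D k20 - 1 / (N : ℝ)| * (1 / (N : ℝ)) ^ 3 := by
            refine Finset.sum_le_sum fun k20 _ => ?_
            refine mul_le_mul_of_nonneg_right ?_ (by positivity)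
            exact (mul_le_mul_of_nonneg_left (le_abs_self _) (hC _)).trans
              (mul_le_mul_of_nonneg_right (hle k20) (abs_nonneg _))
      _ = M * (∑ k20 : Fin N, |(P ^ D) k2D k20 - 1 / (N : ℝ)|) * (1 / (N : ℝ)) ^ 3 := by
            rw [← Finset.sum_mul, ← Finset.mul_sum]
      _ ≤ M * (N * Real.sqrt (1 / (N : ℝ)) * Real.sqrt lam ^ D) * (1 / (N : ℝ)) ^ 3 :=
            mul_le_mul_of_nonneg_right (mul_le_mul_of_nonneg_left (hS k2D) hM0) (by positivity)
      _ = _ := by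
            generalize Real.sqrt (1 / (N : ℝ)) = r
            field_simp
  refine (Finset.sum_le_sum fun k1D _ => Finset.sum_le_sum fun k10 _ =>
    Finset.sum_le_sum fun k2D _ => key k1D k10 k2D).trans (le_of_eq ?_)
  simp only [Finset.sum_mul]
  rw [Finset.sum_comm]
  conv_rhs => rw [Finset.sum_comm]
  exact Finset.sum_congr rfl fun k10 _ => Finset.sum_comm
end

section
/- Proposition 1 (goodput gain of limited feedback beamforming with other-cell interference and feedback delay D): with the notation below, the ergodic goodput gain satisfies Δρ(D) ≤ a·(√λ)^{2D} + b·(√λ)^D, where a = r·Σ_{k1D,k2D} (max_{k10,k20} C(k1D,k10,k2D,k20))·π and b = r·Σ_{k1D,k10,k2D} (max_{k20} C(k1D,k10,k2D,k20))·π²·√π + Σ_{k1D,k2D,k20} (max_{k10} C(k1D,k10,k2D,k20))·π²·√π. -/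
theorem sum_mul_le_sup_mul (N : ℕ) [NeZero N] (f e : Fin N → ℝ) (hf : ∀ k, 0 ≤ f k)
    (p B : ℝ) (hp : 0 ≤ p) (hB : p * ∑ k, |e k| ≤ B) :
    ∑ k, f k * (e k * p) ≤ (Finset.univ.sup' Finset.univ_nonempty f) * B := by
  have hs : ∀ k, f k ≤ Finset.univ.sup' Finset.univ_nonempty f :=
    fun k => Finset.le_sup' f (Finset.mem_univ k)
  have h0 : 0 ≤ Finset.univ.sup' Finset.univ_nonempty f := (hf 0).trans (hs 0)
  calc ∑ k, f k * (e k * p)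
      ≤ ∑ k, (Finset.univ.sup' Finset.univ_nonempty f) * (p * |e k|) := by
        apply Finset.sum_le_sum
        intro k _
        calc f k * (e k * p) ≤ f k * (p * |e k|) := by
              rw [mul_comm (e k) p]
              exact mul_le_mul_of_nonneg_left
                (mul_le_mul_of_nonneg_left (le_abs_self _) hp) (hf k)
          _ ≤ _ := mul_le_mul_of_nonneg_right (hs k) (by positivity)
    _ = (Finset.univ.sup' Finset.univ_nonempty f) * (p * ∑ k, |e k|) := by
        rw [Finset.mul_sum, Finset.mul_sum]
    _ ≤ _ := mul_le_mul_of_nonneg_left hB h0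

/-- Proposition 1: for a fixed feedback delay of `D` samples, the ergodic goodput
gain `Δρ(D) = r·ρ1(D) + (1−r)·ρ2(D) − ρ∞` of the limited feedback beamforming
system with other-cell interference is bounded as
`Δρ(D) ≤ a·(√λ)^{2D} + b·(√λ)^D`, where
`a = r·Σ_{k1D,k2D} (max_{k10,k20} C)·π` and
`b = r·Σ_{k1D,k10,k2D} (max_{k20} C)·π²·√π + Σ_{k1D,k2D,k20} (max_{k10} C)·π²·√π`,
with `π = 1/N`, `P` row stochastic, and the Markov convergence bound
`(Σ_m |(P^D)_{lm} − 1/N|)² ≤ N·λ^D`. -/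
theorem goodput_gain_upper_bound (N : ℕ) [NeZero N]
    (P : Matrix (Fin N) (Fin N) ℝ)
    (hP0 : ∀ l m, 0 ≤ P l m) (hP1 : ∀ l, ∑ m, P l m = 1)
    (lam : ℝ) (hlam0 : 0 ≤ lam) (hlam1 : lam ≤ 1) (D : ℕ)
    (hconv : ∀ l, (∑ m, |(P ^ D) l m - 1 / (N : ℝ)|) ^ 2 ≤ (N : ℝ) * lam ^ D)
    (r : ℝ) (hr0 : 0 ≤ r) (hr1 : r ≤ 1)
    (C : Fin N × Fin N × Fin N × Fin N → ℝ) (hC : ∀ x, 0 ≤ C x) :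
    r * (∑ k1D : Fin N, ∑ k10 : Fin N, ∑ k2D : Fin N, ∑ k20 : Fin N,
          C (k1D, k10, k2D, k20) * (P ^ D) k1D k10 * (P ^ D) k2D k20
            * (1 / (N : ℝ)) ^ 2)
      + (1 - r) * (∑ k1D : Fin N, ∑ k10 : Fin N, ∑ k2D : Fin N, ∑ k20 : Fin N,
          C (k1D, k10, k2D, k20) * (P ^ D) k1D k10 * (1 / (N : ℝ)) ^ 3)
      - (∑ k1D : Fin N, ∑ k10 : Fin N, ∑ k2D : Fin N, ∑ k20 : Fin N,
          C (k1D, k10, k2D, k20) * (1 / (N : ℝ)) ^ 4)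
    ≤ (r * ∑ k1D : Fin N, ∑ k2D : Fin N,
          (Finset.univ.sup' Finset.univ_nonempty fun k10 : Fin N =>
            Finset.univ.sup' Finset.univ_nonempty fun k20 : Fin N =>
              C (k1D, k10, k2D, k20)) * (1 / (N : ℝ)))
        * Real.sqrt lam ^ (2 * D)
      + (r * (∑ k1D : Fin N, ∑ k10 : Fin N, ∑ k2D : Fin N,
            (Finset.univ.sup' Finset.univ_nonempty fun k20 : Fin N =>
                C (k1D, k10, k2D, k20))
              * (1 / (N : ℝ)) ^ 2 * Real.sqrt (1 / (N : ℝ)))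
          + (∑ k1D : Fin N, ∑ k2D : Fin N, ∑ k20 : Fin N,
            (Finset.univ.sup' Finset.univ_nonempty fun k10 : Fin N =>
                C (k1D, k10, k2D, k20))
              * (1 / (N : ℝ)) ^ 2 * Real.sqrt (1 / (N : ℝ))))
        * Real.sqrt lam ^ D := by
  have hNpos : (0 : ℝ) < N := by exact_mod_cast Nat.pos_of_ne_zero (NeZero.ne N)
  obtain ⟨p, hp⟩ : ∃ p : ℝ, p = 1 / (N : ℝ) := ⟨_, rfl⟩
  have hp0 : 0 ≤ p := by rw [hp]; positivity
  have hpN : p * N = 1 := by rw [hp]; field_simp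
  obtain ⟨Q, hQ⟩ : ∃ Q : Matrix (Fin N) (Fin N) ℝ, Q = P ^ D := ⟨_, rfl⟩
  simp only [← hQ, ← hp] at hconv ⊢
  obtain ⟨s, hs⟩ : ∃ s : ℝ, s = Real.sqrt lam ^ D := ⟨_, rfl⟩
  have hs0 : 0 ≤ s := by rw [hs]; positivity
  have hs2 : s ^ 2 = lam ^ D := by
    rw [hs, ← pow_mul, mul_comm, pow_mul, Real.sq_sqrt hlam0]
  have hs3 : Real.sqrt lam ^ (2 * D) = s ^ 2 := by rw [hs, ← pow_mul, mul_comm]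
  rw [hs3, ← hs]
  obtain ⟨q, hq⟩ : ∃ q : ℝ, q = Real.sqrt p := ⟨_, rfl⟩
  have hq0 : 0 ≤ q := by rw [hq]; positivity
  have hq2 : q ^ 2 = p := by rw [hq, Real.sq_sqrt hp0]
  rw [← hq]
  have hB : ∀ l, p * ∑ m, |Q l m - p| ≤ q * s := by
    intro l
    refine abs_le_of_sq_le_sq' ?_ (by positivity) |>.2
    have h := mul_le_mul_of_nonneg_left (hconv l) (sq_nonneg p)
    calc (p * ∑ m, |Q l m - p|) ^ 2 = p ^ 2 * (∑ m, |Q l m - p|) ^ 2 := by ring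
      _ ≤ p ^ 2 * (N * lam ^ D) := h
      _ = (p * N) * (p * lam ^ D) := by ring
      _ = (q * s) ^ 2 := by rw [hpN, mul_pow, hq2, hs2, one_mul]
  have hdec : r * (∑ k1D : Fin N, ∑ k10 : Fin N, ∑ k2D : Fin N, ∑ k20 : Fin N,
          C (k1D, k10, k2D, k20) * Q k1D k10 * Q k2D k20 * p ^ 2)
      + (1 - r) * (∑ k1D : Fin N, ∑ k10 : Fin N, ∑ k2D : Fin N, ∑ k20 : Fin N,
          C (k1D, k10, k2D, k20) * Q k1D k10 * p ^ 3)
      - (∑ k1D : Fin N, ∑ k10 : Fin N, ∑ k2D : Fin N, ∑ k20 : Fin N,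
          C (k1D, k10, k2D, k20) * p ^ 4)
      = r * (∑ k1D : Fin N, ∑ k10 : Fin N, ∑ k2D : Fin N, ∑ k20 : Fin N,
          C (k1D, k10, k2D, k20) * ((Q k1D k10 - p) * p) * ((Q k2D k20 - p) * p))
      + r * (∑ k1D : Fin N, ∑ k10 : Fin N, ∑ k2D : Fin N, ∑ k20 : Fin N,
          C (k1D, k10, k2D, k20) * ((Q k2D k20 - p) * p) * p ^ 2)
      + (∑ k1D : Fin N, ∑ k10 : Fin N, ∑ k2D : Fin N, ∑ k20 : Fin N,
          C (k1D, k10, k2D, k20) * ((Q k1D k10 - p) * p) * p ^ 2) := by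
    simp only [Finset.mul_sum, ← Finset.sum_add_distrib, ← Finset.sum_sub_distrib]
    refine Finset.sum_congr rfl fun a _ => Finset.sum_congr rfl fun b _ =>
      Finset.sum_congr rfl fun c _ => Finset.sum_congr rfl fun d _ => ?_
    ring
  have h1 : (∑ k1D : Fin N, ∑ k10 : Fin N, ∑ k2D : Fin N, ∑ k20 : Fin N,
          C (k1D, k10, k2D, k20) * ((Q k1D k10 - p) * p) * ((Q k2D k20 - p) * p))
      ≤ (∑ k1D : Fin N, ∑ k2D : Fin N,
          (Finset.univ.sup' Finset.univ_nonempty fun k10 : Fin N =>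
            Finset.univ.sup' Finset.univ_nonempty fun k20 : Fin N =>
              C (k1D, k10, k2D, k20)) * p) * s ^ 2 := by
    simp only [Finset.sum_mul]
    refine Finset.sum_le_sum fun a _ => ?_
    rw [Finset.sum_comm]
    refine Finset.sum_le_sum fun c _ => ?_
    have key : ∀ b, ∑ d, C (a, b, c, d) * ((Q a b - p) * p) * ((Q c d - p) * p)
        ≤ (Finset.univ.sup' Finset.univ_nonempty fun d : Fin N => C (a, b, c, d))
          * (|Q a b - p| * p) * (q * s) := by
      intro b
      have hh := sum_mul_le_sup_mul N (fun d => C (a, b, c, d))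
        (fun d => (Q a b - p) * p * (Q c d - p)) (fun d => hC _) p
        (|Q a b - p| * p * (q * s)) hp0 (by
          simp only [abs_mul, abs_of_nonneg hp0, ← Finset.mul_sum]
          calc _ = |Q a b - p| * p * (p * ∑ m, |Q c m - p|) := by ring
            _ ≤ _ := mul_le_mul_of_nonneg_left (hB c) (by positivity))
      calc _ = _ := Finset.sum_congr rfl fun d _ => by ring
        _ ≤ _ := hh
        _ = _ := by ring
    have hh := sum_mul_le_sup_mul N
      (fun b => Finset.univ.sup' Finset.univ_nonempty fun d : Fin N => C (a, b, c, d))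
      (fun b => |Q a b - p|)
      (fun b => (hC (a, b, c, 0)).trans
        (Finset.le_sup' (fun d : Fin N => C (a, b, c, d)) (Finset.mem_univ 0)))
      p (q * s) hp0 (by simpa only [abs_abs] using hB a)
    calc _ ≤ _ := Finset.sum_le_sum fun b _ => key b
      _ = _ := (Finset.sum_mul _ _ _).symm
      _ ≤ _ := mul_le_mul_of_nonneg_right hh (by positivity)
      _ = _ := by rw [← hq2]; ring
  have h2 : (∑ k1D : Fin N, ∑ k10 : Fin N, ∑ k2D : Fin N, ∑ k20 : Fin N,
          C (k1D, k10, k2D, k20) * ((Q k2D k20 - p) * p) * p ^ 2)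
      ≤ (∑ k1D : Fin N, ∑ k10 : Fin N, ∑ k2D : Fin N,
            (Finset.univ.sup' Finset.univ_nonempty fun k20 : Fin N =>
                C (k1D, k10, k2D, k20)) * p ^ 2 * q) * s := by
    simp only [Finset.sum_mul]
    refine Finset.sum_le_sum fun a _ => Finset.sum_le_sum fun b _ =>
      Finset.sum_le_sum fun c _ => ?_
    have hh := sum_mul_le_sup_mul N (fun d => C (a, b, c, d))
      (fun d => Q c d - p) (fun d => hC _) p _ hp0 (hB c)
    calc _ = _ := (Finset.sum_mul _ _ _).symm
      _ ≤ _ := mul_le_mul_of_nonneg_right hh (sq_nonneg p)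
      _ = _ := by ring
  have h3 : (∑ k1D : Fin N, ∑ k10 : Fin N, ∑ k2D : Fin N, ∑ k20 : Fin N,
          C (k1D, k10, k2D, k20) * ((Q k1D k10 - p) * p) * p ^ 2)
      ≤ (∑ k1D : Fin N, ∑ k2D : Fin N, ∑ k20 : Fin N,
            (Finset.univ.sup' Finset.univ_nonempty fun k10 : Fin N =>
                C (k1D, k10, k2D, k20)) * p ^ 2 * q) * s := by
    simp only [Finset.sum_mul]
    refine Finset.sum_le_sum fun a _ => ?_
    rw [Finset.sum_comm]
    refine Finset.sum_le_sum fun c _ => ?_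
    rw [Finset.sum_comm]
    refine Finset.sum_le_sum fun d _ => ?_
    have hh := sum_mul_le_sup_mul N (fun b => C (a, b, c, d))
      (fun b => Q a b - p) (fun b => hC _) p _ hp0 (hB a)
    calc _ = _ := (Finset.sum_mul _ _ _).symm
      _ ≤ _ := mul_le_mul_of_nonneg_right hh (sq_nonneg p)
      _ = _ := by ring
  rw [hdec]
  have h1r := mul_le_mul_of_nonneg_left h1 hr0
  have h2r := mul_le_mul_of_nonneg_left h2 hr0
  calc _ ≤ _ := add_le_add (add_le_add h1r h2r) h3
    _ = _ := by ring
end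

section
/- Proposition 3 (goodput gain of limited feedback precoded spatial multiplexing with other-cell interference and feedback delay D): with the notation below and assuming r ≤ 1/2, the ergodic goodput gain satisfies Δρ_P(D) ≤ a·(√λ)^{2D} + b·(√λ)^D, where a = r·Σ_{k1D,k2D} (max_{k10,k20} C_P(k1D,k10,k2D,k20))·π and b = (1−r)·Σ_{k1D,k10,k2D} (max_{k20} C_P(k1D,k10,k2D,k20))·π²·√π + Σ_{k1D,k2D,k20} (max_{k10} C_P(k1D,k10,k2D,k20))·π²·√π. -/
lemma sup_bound {N : ℕ} [NeZero N] (c e : Fin N → ℝ) (hc : ∀ k, 0 ≤ c k) (T : ℝ)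
    (hT : ∑ k, |e k| ≤ T) :
    ∑ k, c k * e k ≤ (Finset.univ.sup' Finset.univ_nonempty c) * T := by
  have hM : ∀ k, c k ≤ Finset.univ.sup' Finset.univ_nonempty c :=
    fun k => Finset.le_sup' c (Finset.mem_univ k)
  have hM0 : 0 ≤ Finset.univ.sup' Finset.univ_nonempty c := (hc 0).trans (hM 0)
  calc ∑ k, c k * e k ≤ ∑ k, (Finset.univ.sup' Finset.univ_nonempty c) * |e k| := by
        refine Finset.sum_le_sum fun k _ => ?_
        exact (mul_le_mul_of_nonneg_left (le_abs_self _) (hc k)).trans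
          (mul_le_mul_of_nonneg_right (hM k) (abs_nonneg _))
    _ = (Finset.univ.sup' Finset.univ_nonempty c) * ∑ k, |e k| := by rw [Finset.mul_sum]
    _ ≤ _ := mul_le_mul_of_nonneg_left hT hM0

lemma sup_bound_two {N : ℕ} [NeZero N] (c : Fin N → Fin N → ℝ) (e f : Fin N → ℝ)
    (hc : ∀ k l, 0 ≤ c k l) (T : ℝ) (hT : ∑ k, |e k| ≤ T) (hT' : ∑ k, |f k| ≤ T) :
    ∑ k, ∑ l, c k l * e k * f l ≤ (Finset.univ.sup' Finset.univ_nonempty fun k =>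
      Finset.univ.sup' Finset.univ_nonempty fun l => c k l) * (T * T) := by
  have hT0 : 0 ≤ T := (Finset.sum_nonneg fun k _ => abs_nonneg (e k)).trans hT
  have h0 : ∀ k, 0 ≤ Finset.univ.sup' Finset.univ_nonempty fun l => c k l := fun k =>
    (hc k 0).trans (Finset.le_sup' (fun l => c k l) (Finset.mem_univ 0))
  have h1 := sup_bound (fun k => Finset.univ.sup' Finset.univ_nonempty fun l => c k l)
    (fun k => |e k| * T) h0 (T * T) (by
      simp only [abs_mul, abs_abs, abs_of_nonneg hT0]
      rw [← Finset.sum_mul]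
      exact mul_le_mul_of_nonneg_right hT hT0)
  refine le_trans (Finset.sum_le_sum fun k _ => ?_) h1
  have h2 := sup_bound (fun l => c k l) (fun l => e k * f l) (hc k) (|e k| * T) (by
    simp only [abs_mul]
    rw [← Finset.mul_sum]
    exact mul_le_mul_of_nonneg_left hT' (abs_nonneg _))
  simpa only [mul_assoc] using h2

/-- Proposition 3: for a fixed feedback delay of `D` samples and `r ≤ 1/2`, the
ergodic goodput gain `Δρ_P(D) = r·ρ1(D) + (1−r)·ρ2(D) − ρ∞` of the limited
feedback precoded spatial multiplexing system with other-cell interference is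
bounded as `Δρ_P(D) ≤ a·(√λ)^{2D} + b·(√λ)^D`, where
`a = r·Σ_{k1D,k2D} (max_{k10,k20} C_P)·π` and
`b = (1−r)·Σ_{k1D,k10,k2D} (max_{k20} C_P)·π²·√π + Σ_{k1D,k2D,k20} (max_{k10} C_P)·π²·√π`,
with `π = 1/N`, `P` row stochastic, and the Markov convergence bound
`(Σ_m |(P^D)_{lm} − 1/N|)² ≤ N·λ^D`. -/
theorem precoded_goodput_gain_upper_bound (N : ℕ) [NeZero N]
    (P : Matrix (Fin N) (Fin N) ℝ)
    (hP0 : ∀ l m, 0 ≤ P l m) (hP1 : ∀ l, ∑ m, P l m = 1)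
    (lam : ℝ) (hlam0 : 0 ≤ lam) (hlam1 : lam ≤ 1) (D : ℕ)
    (hconv : ∀ l, (∑ m, |(P ^ D) l m - 1 / (N : ℝ)|) ^ 2 ≤ (N : ℝ) * lam ^ D)
    (r : ℝ) (hr0 : 0 ≤ r) (hr1 : r ≤ 1/2)
    (C : Fin N × Fin N × Fin N × Fin N → ℝ) (hC : ∀ x, 0 ≤ C x) :
    r * (∑ k1D : Fin N, ∑ k10 : Fin N, ∑ k2D : Fin N, ∑ k20 : Fin N,
          C (k1D, k10, k2D, k20) * (P ^ D) k1D k10 * (P ^ D) k2D k20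
            * (1 / (N : ℝ)) ^ 2)
      + (1 - r) * (∑ k1D : Fin N, ∑ k10 : Fin N, ∑ k2D : Fin N, ∑ k20 : Fin N,
          C (k1D, k10, k2D, k20) * (P ^ D) k1D k10 * (1 / (N : ℝ)) ^ 3)
      - (∑ k1D : Fin N, ∑ k10 : Fin N, ∑ k2D : Fin N, ∑ k20 : Fin N,
          C (k1D, k10, k2D, k20) * (1 / (N : ℝ)) ^ 4)
    ≤ (r * ∑ k1D : Fin N, ∑ k2D : Fin N,
          (Finset.univ.sup' Finset.univ_nonempty fun k10 : Fin N =>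
            Finset.univ.sup' Finset.univ_nonempty fun k20 : Fin N =>
              C (k1D, k10, k2D, k20)) * (1 / (N : ℝ)))
        * Real.sqrt lam ^ (2 * D)
      + ((1 - r) * (∑ k1D : Fin N, ∑ k10 : Fin N, ∑ k2D : Fin N,
            (Finset.univ.sup' Finset.univ_nonempty fun k20 : Fin N =>
                C (k1D, k10, k2D, k20))
              * (1 / (N : ℝ)) ^ 2 * Real.sqrt (1 / (N : ℝ)))
          + (∑ k1D : Fin N, ∑ k2D : Fin N, ∑ k20 : Fin N,
            (Finset.univ.sup' Finset.univ_nonempty fun k10 : Fin N =>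
                C (k1D, k10, k2D, k20))
              * (1 / (N : ℝ)) ^ 2 * Real.sqrt (1 / (N : ℝ))))
        * Real.sqrt lam ^ D := by
  obtain ⟨Q, hQ⟩ : ∃ Q, Q = P ^ D := ⟨_, rfl⟩
  rw [← hQ] at hconv ⊢
  obtain ⟨p, hp⟩ : ∃ p : ℝ, p = 1 / (N : ℝ) := ⟨_, rfl⟩
  rw [← hp] at hconv ⊢
  have hN : (0 : ℝ) < N := by exact_mod_cast Nat.pos_of_ne_zero (NeZero.ne N)
  have hp0 : 0 < p := by rw [hp]; positivity
  obtain ⟨s, hs⟩ : ∃ s, s = Real.sqrt lam ^ D := ⟨_, rfl⟩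
  have hs0 : 0 ≤ s := by rw [hs]; positivity
  have hss : s ^ 2 = lam ^ D := by
    rw [hs, ← pow_mul, mul_comm, pow_mul, Real.sq_sqrt hlam0]
  have hs2 : Real.sqrt lam ^ (2 * D) = s ^ 2 := by
    rw [hs, ← pow_mul, mul_comm]
  rw [hs2, ← hs]
  obtain ⟨q, hq⟩ : ∃ q, q = Real.sqrt p := ⟨_, rfl⟩
  have hq0 : 0 ≤ q := by rw [hq]; positivity
  have hqq : q ^ 2 = p := by rw [hq, Real.sq_sqrt hp0.le]
  rw [← hq]
  obtain ⟨n, hn⟩ : ∃ n, n = Real.sqrt (N : ℝ) := ⟨_, rfl⟩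
  have hn0 : 0 ≤ n := by rw [hn]; positivity
  have hnn : n ^ 2 = N := by rw [hn, Real.sq_sqrt hN.le]
  have hpN : p * n ^ 2 = 1 := by rw [hnn, hp]; field_simp
  have hqn : q * n = 1 := by
    have : (q * n) ^ 2 = 1 := by rw [mul_pow, hqq, hpN]
    nlinarith [mul_nonneg hq0 hn0]
  have hpn : p * n = q := by rw [← hqq]; linear_combination q * hqn
  have hT : ∀ l, ∑ m, |Q l m - p| ≤ n * s := fun l => by
    refine (le_abs_self _).trans <| abs_le_of_sq_le_sq ?_ (mul_nonneg hn0 hs0)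
    rw [mul_pow, hnn, hss]; exact hconv l
  have h1 : (∑ k1D : Fin N, ∑ k10 : Fin N, ∑ k2D : Fin N, ∑ k20 : Fin N,
      C (k1D, k10, k2D, k20) * (Q k1D k10 - p) * (Q k2D k20 - p)) * p ^ 2 ≤
      (∑ k1D : Fin N, ∑ k2D : Fin N,
          (Finset.univ.sup' Finset.univ_nonempty fun k10 : Fin N =>
            Finset.univ.sup' Finset.univ_nonempty fun k20 : Fin N =>
              C (k1D, k10, k2D, k20)) * p) * s ^ 2 := by
    simp only [Finset.sum_mul]
    refine Finset.sum_le_sum fun a _ => ?_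
    rw [Finset.sum_comm]
    refine Finset.sum_le_sum fun b _ => ?_
    simp only [← Finset.sum_mul]
    have := mul_le_mul_of_nonneg_right (sup_bound_two (fun k l => C (a, k, b, l))
      (fun k => Q a k - p) (fun k => Q b k - p) (fun _ _ => hC _) _ (hT a) (hT b))
      (sq_nonneg p)
    refine this.trans (le_of_eq ?_)
    linear_combination (Finset.univ.sup' Finset.univ_nonempty fun k10 : Fin N =>
            Finset.univ.sup' Finset.univ_nonempty fun k20 : Fin N =>
              C (a, k10, b, k20)) * p * s ^ 2 * hpN
  have h2 : (∑ k1D : Fin N, ∑ k10 : Fin N, ∑ k2D : Fin N, ∑ k20 : Fin N,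
      C (k1D, k10, k2D, k20) * (Q k1D k10 - p)) * p ^ 3 ≤
      (∑ k1D : Fin N, ∑ k2D : Fin N, ∑ k20 : Fin N,
            (Finset.univ.sup' Finset.univ_nonempty fun k10 : Fin N =>
                C (k1D, k10, k2D, k20)) * p ^ 2 * q) * s := by
    simp only [Finset.sum_mul]
    refine Finset.sum_le_sum fun a _ => ?_
    rw [Finset.sum_comm]
    refine Finset.sum_le_sum fun b _ => ?_
    rw [Finset.sum_comm]
    refine Finset.sum_le_sum fun c _ => ?_
    rw [← Finset.sum_mul]
    have := mul_le_mul_of_nonneg_right (sup_bound (fun k => C (a, k, b, c))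
      (fun k => Q a k - p) (fun _ => hC _) _ (hT a)) (pow_nonneg hp0.le 3)
    refine this.trans (le_of_eq ?_)
    linear_combination (Finset.univ.sup' Finset.univ_nonempty fun k10 : Fin N =>
              C (a, k10, b, c)) * p ^ 2 * s * hpn
  have h3 : (∑ k1D : Fin N, ∑ k10 : Fin N, ∑ k2D : Fin N, ∑ k20 : Fin N,
      C (k1D, k10, k2D, k20) * (Q k2D k20 - p)) * p ^ 3 ≤
      (∑ k1D : Fin N, ∑ k10 : Fin N, ∑ k2D : Fin N,
            (Finset.univ.sup' Finset.univ_nonempty fun k20 : Fin N =>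
                C (k1D, k10, k2D, k20)) * p ^ 2 * q) * s := by
    simp only [Finset.sum_mul]
    refine Finset.sum_le_sum fun a _ => ?_
    refine Finset.sum_le_sum fun b _ => ?_
    refine Finset.sum_le_sum fun c _ => ?_
    rw [← Finset.sum_mul]
    have := mul_le_mul_of_nonneg_right (sup_bound (fun k => C (a, b, c, k))
      (fun k => Q c k - p) (fun _ => hC _) _ (hT c)) (pow_nonneg hp0.le 3)
    refine this.trans (le_of_eq ?_)
    linear_combination (Finset.univ.sup' Finset.univ_nonempty fun k20 : Fin N =>
              C (a, b, c, k20)) * p ^ 2 * s * hpn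
  have h30 : 0 ≤ (∑ k1D : Fin N, ∑ k10 : Fin N, ∑ k2D : Fin N,
            (Finset.univ.sup' Finset.univ_nonempty fun k20 : Fin N =>
                C (k1D, k10, k2D, k20)) * p ^ 2 * q) * s := by
    refine mul_nonneg (Finset.sum_nonneg fun a _ => Finset.sum_nonneg fun b _ =>
      Finset.sum_nonneg fun c _ => mul_nonneg (mul_nonneg ?_ (sq_nonneg p)) hq0) hs0
    exact (hC (a, b, c, 0)).trans
      (Finset.le_sup' (fun k20 => C (a, b, c, k20)) (Finset.mem_univ 0))
  have key : r * (∑ k1D : Fin N, ∑ k10 : Fin N, ∑ k2D : Fin N, ∑ k20 : Fin N,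
          C (k1D, k10, k2D, k20) * Q k1D k10 * Q k2D k20 * p ^ 2)
      + (1 - r) * (∑ k1D : Fin N, ∑ k10 : Fin N, ∑ k2D : Fin N, ∑ k20 : Fin N,
          C (k1D, k10, k2D, k20) * Q k1D k10 * p ^ 3)
      - (∑ k1D : Fin N, ∑ k10 : Fin N, ∑ k2D : Fin N, ∑ k20 : Fin N,
          C (k1D, k10, k2D, k20) * p ^ 4) =
      r * ((∑ k1D : Fin N, ∑ k10 : Fin N, ∑ k2D : Fin N, ∑ k20 : Fin N,
      C (k1D, k10, k2D, k20) * (Q k1D k10 - p) * (Q k2D k20 - p)) * p ^ 2) +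
      (∑ k1D : Fin N, ∑ k10 : Fin N, ∑ k2D : Fin N, ∑ k20 : Fin N,
      C (k1D, k10, k2D, k20) * (Q k1D k10 - p)) * p ^ 3 +
      r * ((∑ k1D : Fin N, ∑ k10 : Fin N, ∑ k2D : Fin N, ∑ k20 : Fin N,
      C (k1D, k10, k2D, k20) * (Q k2D k20 - p)) * p ^ 3) := by
    simp only [Finset.sum_mul, Finset.mul_sum, ← Finset.sum_add_distrib,
      ← Finset.sum_sub_distrib]
    refine Finset.sum_congr rfl fun a _ => Finset.sum_congr rfl fun b _ =>
      Finset.sum_congr rfl fun c _ => Finset.sum_congr rfl fun d _ => ?_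
    ring
  rw [key]
  have e1 := mul_le_mul_of_nonneg_left h1 hr0
  have e3 := mul_le_mul_of_nonneg_left h3 hr0
  have e4 := mul_le_mul_of_nonneg_right (show r ≤ 1 - r by linarith) h30
  linarith
end

section
/- Proposition 2 (goodput gain with zero-forcing interference cancellation at the receiver): with the notation below, the feedback goodput gain satisfies Δρ_ZF(D) = Σ_{k1D,k10} W(k1D,k10)·((P^D)_{k1D,k10} − π)·π ≤ c·(√λ)^D, where c = Σ_{k1D} √π · (max_{k10} W(k1D,k10)). -/
/-- Proposition 2: with zero-forcing interference cancellation at the receiver,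
the feedback goodput gain
`Δρ_ZF(D) = Σ_{k1D,k10} W(k1D,k10)·((P^D)_{k1D,k10} − π)·π` satisfies
`Δρ_ZF(D) ≤ c·(√λ)^D`, where `c = Σ_{k1D} √π · (max_{k10} W(k1D,k10))`,
`π = 1/N`, `P` is row stochastic, and the Markov convergence bound
`(Σ_m |(P^D)_{lm} − 1/N|)² ≤ N·λ^D` holds. -/
theorem zero_forcing_goodput_gain_bound (N : ℕ) [NeZero N]
    (P : Matrix (Fin N) (Fin N) ℝ)
    (hP0 : ∀ l m, 0 ≤ P l m) (hP1 : ∀ l, ∑ m, P l m = 1)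
    (lam : ℝ) (hlam0 : 0 ≤ lam) (hlam1 : lam ≤ 1) (D : ℕ)
    (hconv : ∀ l, (∑ m, |(P ^ D) l m - 1 / (N : ℝ)|) ^ 2 ≤ (N : ℝ) * lam ^ D)
    (W : Fin N × Fin N → ℝ) (hW : ∀ x, 0 ≤ W x) :
    (∑ k1D : Fin N, ∑ k10 : Fin N,
        W (k1D, k10) * ((P ^ D) k1D k10 - 1 / (N : ℝ)) * (1 / (N : ℝ)))
      ≤ (∑ k1D : Fin N, Real.sqrt (1 / (N : ℝ))
          * Finset.univ.sup' Finset.univ_nonempty fun k10 : Fin N =>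
              W (k1D, k10))
        * Real.sqrt lam ^ D := by
  have hN : (0 : ℝ) < N := by
    exact_mod_cast Nat.pos_of_ne_zero (NeZero.ne N)
  rw [Finset.sum_mul]
  refine Finset.sum_le_sum fun l _ => ?_
  set M := Finset.univ.sup' Finset.univ_nonempty fun k10 : Fin N => W (l, k10) with hM
  have hle : ∀ k, W (l, k) ≤ M := fun k =>
    Finset.le_sup' (fun k10 : Fin N => W (l, k10)) (Finset.mem_univ k)
  have hM0 : 0 ≤ M := (hW (l, 0)).trans (hle 0)
  have key : (∑ m, |(P ^ D) l m - 1 / (N : ℝ)|) * (1 / (N : ℝ))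
      ≤ Real.sqrt (1 / (N : ℝ)) * Real.sqrt lam ^ D := by
    refine (fun h h0 => (abs_le_of_sq_le_sq' h h0).2) ?_ (by positivity)
    have e : (Real.sqrt (1 / (N : ℝ)) * Real.sqrt lam ^ D) ^ 2
        = ((N : ℝ) * lam ^ D) * (1 / (N : ℝ)) ^ 2 := by
      rw [mul_pow, ← pow_mul, mul_comm D 2, pow_mul, Real.sq_sqrt hlam0,
        Real.sq_sqrt (by positivity)]
      field_simp
    rw [e, mul_pow]
    exact mul_le_mul_of_nonneg_right (hconv l) (by positivity)
  calc ∑ k : Fin N, W (l, k) * ((P ^ D) l k - 1 / (N : ℝ)) * (1 / (N : ℝ))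
      ≤ ∑ k : Fin N, M * |(P ^ D) l k - 1 / (N : ℝ)| * (1 / (N : ℝ)) := by
        refine Finset.sum_le_sum fun k _ => ?_
        refine mul_le_mul_of_nonneg_right ?_ (by positivity)
        exact (mul_le_mul_of_nonneg_left (le_abs_self _) (hW _)).trans
          (mul_le_mul_of_nonneg_right (hle k) (abs_nonneg _))
    _ = M * ((∑ m, |(P ^ D) l m - 1 / (N : ℝ)|) * (1 / (N : ℝ))) := by
        rw [← Finset.sum_mul, ← Finset.mul_sum, mul_assoc]
    _ ≤ M * (Real.sqrt (1 / (N : ℝ)) * Real.sqrt lam ^ D) :=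
        mul_le_mul_of_nonneg_left key hM0
    _ = _ := by ring
end

section
/- Convergence of the ergodic goodput as the feedback delay tends to infinity: with the notation below, if λ < 1 and the Markov convergence bound holds for every delay D, then the ergodic goodput gain Δρ(D) tends to 0 as D → ∞; equivalently, r·ρ1(D) + (1−r)·ρ2(D) converges to ρ∞ = Σ_{k1D,k10,k2D,k20} C(k1D,k10,k2D,k20)·π⁴. -/
/-- Convergence of the ergodic goodput as the feedback delay tends to infinity:
if `λ < 1` and the Markov convergence bound `(Σ_m |(P^D)_{lm} − 1/N|)² ≤ N·λ^D`
holds for every delay `D`, then the ergodic goodput gain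
`Δρ(D) = r·ρ1(D) + (1−r)·ρ2(D) − ρ∞` tends to `0` as `D → ∞`,
where `π = 1/N` and `P` is row stochastic. -/
theorem goodput_gain_tendsto_zero (N : ℕ) [NeZero N]
    (P : Matrix (Fin N) (Fin N) ℝ)
    (hP0 : ∀ l m, 0 ≤ P l m) (hP1 : ∀ l, ∑ m, P l m = 1)
    (lam : ℝ) (hlam0 : 0 ≤ lam) (hlam1 : lam < 1)
    (hconv : ∀ (D : ℕ) (l : Fin N),
      (∑ m, |(P ^ D) l m - 1 / (N : ℝ)|) ^ 2 ≤ (N : ℝ) * lam ^ D)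
    (r : ℝ) (hr0 : 0 ≤ r) (hr1 : r ≤ 1)
    (C : Fin N × Fin N × Fin N × Fin N → ℝ) (hC : ∀ x, 0 ≤ C x) :
    Filter.Tendsto (fun D : ℕ =>
        r * (∑ k1D : Fin N, ∑ k10 : Fin N, ∑ k2D : Fin N, ∑ k20 : Fin N,
              C (k1D, k10, k2D, k20) * (P ^ D) k1D k10 * (P ^ D) k2D k20
                * (1 / (N : ℝ)) ^ 2)
          + (1 - r) * (∑ k1D : Fin N, ∑ k10 : Fin N, ∑ k2D : Fin N, ∑ k20 : Fin N,
              C (k1D, k10, k2D, k20) * (P ^ D) k1D k10 * (1 / (N : ℝ)) ^ 3)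
          - (∑ k1D : Fin N, ∑ k10 : Fin N, ∑ k2D : Fin N, ∑ k20 : Fin N,
              C (k1D, k10, k2D, k20) * (1 / (N : ℝ)) ^ 4))
      Filter.atTop (nhds 0) := by
  have hent : ∀ l m, Filter.Tendsto (fun D : ℕ => (P ^ D) l m) Filter.atTop
      (nhds (1 / (N : ℝ))) := by
    intro l m
    have hg : Filter.Tendsto (fun D : ℕ => Real.sqrt ((N : ℝ) * lam ^ D)) Filter.atTop
        (nhds 0) := by
      have h1 := ((tendsto_pow_atTop_nhds_zero_of_lt_one hlam0 hlam1).const_mul (N : ℝ)).sqrt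
      simpa using h1
    rw [tendsto_iff_norm_sub_tendsto_zero]
    refine squeeze_zero (fun _ => norm_nonneg _) (fun D => ?_) hg
    rw [Real.norm_eq_abs]
    refine le_trans ?_ (Real.le_sqrt_of_sq_le (hconv D l))
    exact Finset.single_le_sum (f := fun m => |(P ^ D) l m - 1 / (N : ℝ)|)
      (fun _ _ => abs_nonneg _) (Finset.mem_univ m)
  have h1 : Filter.Tendsto (fun D : ℕ =>
      ∑ k1D : Fin N, ∑ k10 : Fin N, ∑ k2D : Fin N, ∑ k20 : Fin N,
        C (k1D, k10, k2D, k20) * (P ^ D) k1D k10 * (P ^ D) k2D k20 * (1 / (N : ℝ)) ^ 2)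
      Filter.atTop (nhds (∑ k1D : Fin N, ∑ k10 : Fin N, ∑ k2D : Fin N, ∑ k20 : Fin N,
        C (k1D, k10, k2D, k20) * (1 / (N : ℝ)) ^ 4)) := by
    refine tendsto_finsetSum _ fun a _ => tendsto_finsetSum _ fun b _ =>
      tendsto_finsetSum _ fun c _ => tendsto_finsetSum _ fun d _ => ?_
    have h := (((hent a b).const_mul (C (a, b, c, d))).mul (hent c d)).mul_const
      ((1 / (N : ℝ)) ^ 2)
    convert h using 2
    ring
  have h2 : Filter.Tendsto (fun D : ℕ =>
      ∑ k1D : Fin N, ∑ k10 : Fin N, ∑ k2D : Fin N, ∑ k20 : Fin N,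
        C (k1D, k10, k2D, k20) * (P ^ D) k1D k10 * (1 / (N : ℝ)) ^ 3)
      Filter.atTop (nhds (∑ k1D : Fin N, ∑ k10 : Fin N, ∑ k2D : Fin N, ∑ k20 : Fin N,
        C (k1D, k10, k2D, k20) * (1 / (N : ℝ)) ^ 4)) := by
    refine tendsto_finsetSum _ fun a _ => tendsto_finsetSum _ fun b _ =>
      tendsto_finsetSum _ fun c _ => tendsto_finsetSum _ fun d _ => ?_
    have h := ((hent a b).const_mul (C (a, b, c, d))).mul_const ((1 / (N : ℝ)) ^ 3)
    convert h using 2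
    ring
  have h3 := ((h1.const_mul r).add (h2.const_mul (1 - r))).sub_const
    (∑ k1D : Fin N, ∑ k10 : Fin N, ∑ k2D : Fin N, ∑ k20 : Fin N,
        C (k1D, k10, k2D, k20) * (1 / (N : ℝ)) ^ 4)
  convert h3 using 2
  ring
end
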